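/- arXiv:1808.05698 — 2 statements merged into one kernel-verified Lean document; each statement's English description precedes it below -/
import Mathlib

section
/- Let r = updateHLC(h, pc, t) be the result of the hybrid logical clock update. Then t <_lex r, i.e., the updated clock value is strictly greater, in the lexicographic order on ℕ × ℕ, than the incoming timestamp t. (This is the property used in the paper's Theorems on monotonic-write and write-follows-reads consistency: after calling updateHLC(dt), the server's HLC strictly exceeds the dependency timestamp dt sent by the client.) -/
/-- Hybrid logical clock update: given current clock `h = (l', c')`, physical
clock reading `pc`, and incoming timestamp `t = (tl, tc)`, return `(l, c)`
where `l = max (l', pc, tl)` and `c` is as in the HLC algorithm. -/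
def updateHLC (h : ℕ × ℕ) (pc : ℕ) (t : ℕ × ℕ) : ℕ × ℕ :=
  let l := max (max h.1 pc) t.1
  let c :=
    if l = h.1 ∧ l = t.1 then max h.2 t.2 + 1
    else if l = h.1 then h.2 + 1
    else if l = t.1 then t.2 + 1
    else 0
  (l, c)

/-- The updated HLC value strictly exceeds the incoming timestamp `t`
in the lexicographic order on `ℕ × ℕ`. -/
theorem updateHLC_lex_gt_incoming (h : ℕ × ℕ) (pc : ℕ) (t : ℕ × ℕ) :
    Prod.Lex (· < ·) (· < ·) t (updateHLC h pc t) := by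
  rw [Prod.lex_def]
  have hle : t.1 ≤ max (max h.1 pc) t.1 := le_max_right _ _
  rcases hle.lt_or_eq with hlt | heq
  · exact Or.inl hlt
  · refine Or.inr ⟨heq, ?_⟩
    -- Equal first components rule out the branches `l ≠ t.1`.
    simp only [updateHLC, ← heq, and_true, if_true]
    split_ifs <;> omega
end

section
/- Let r = updateHLC(h, pc, t) be the result of the hybrid logical clock update. Then h <_lex r, i.e., the hybrid logical clock strictly increases, in the lexicographic order on ℕ × ℕ, with every update. -/
/-- The hybrid logical clock strictly increases, in the lexicographic order
on `ℕ × ℕ`, with every update. -/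
theorem updateHLC_lex_gt_current (h : ℕ × ℕ) (pc : ℕ) (t : ℕ × ℕ) :
    Prod.Lex (· < ·) (· < ·) h (updateHLC h pc t) := by
  rw [Prod.lex_def]
  -- Either the logical component grows, or it is unchanged and the counter is at least `h.2 + 1`.
  rcases (le_max_of_le_left (le_max_left h.1 pc) : h.1 ≤ max (max h.1 pc) t.1).lt_or_eq with hl | hl
  · exact Or.inl hl
  · refine Or.inr ⟨hl, ?_⟩
    simp only [updateHLC, ← hl, true_and, if_true]
    split_ifs <;> omega
end
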